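/- (Titchmarsh convolution theorem) Let ξ₁, ξ₂ ∈ L¹_ℂ(ℝ) with supp(ξ_l) ⊂ [0,∞) for l = 1,2, and suppose for some constant a > 0 that ∫₀^s ξ₁(s−τ) ξ₂(τ) dτ = 0 for almost all s ∈ [0,a]. Then there exist nonnegative constants a₁ and a₂ with a₁ + a₂ ≥ a such that ξ₁(τ) = 0 for almost all τ ∈ [0,a₁] and ξ₂(τ) = 0 for almost all τ ∈ [0,a₂]. -/

import Mathlib

open MeasureTheory Complex Set Filter Topology

/-!
After truncation, the convolution hypothesis says that the Fourier–Laplace transforms `F`, `G`,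
normalised to be bounded by `1` in the upper half-plane, satisfy `|F G| ≤ exp(-a Im z)` there. On
the circle `|ζ - iρ| = ρ`, which touches the real line at `0`, the function `Im` has mean `ρ`, so
one of the nonnegative functions `-log |F|`, `-log |G|` has mean at least `aρ/2`; say it is the
first. On the disc, the Poisson kernel at `z` is at least `(2ρ Im z - |z|²) / 4ρ²`, so the
Poisson–Jensen inequality bounds `-log |F z|` below by `(a/4) (Im z - |z|² / 2ρ)`, and `ρ → ∞`
gives `|F z| ≤ exp(-(a/4) Im z)`.

Thus one of `F`, `G` decays exponentially at a fixed fraction of the rate `a`. Applied to what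
remains after dividing `F` and `G` by their maximal decays `exp(iαz)` and `exp(iβz)`, this forces
`α + β ≥ a`. By Paley–Wiener, decay at rate `α` means vanishing on `[0, α]`.
-/

section PoissonJensen

open Metric Real
open scoped ComplexConjugate

lemma exists_eq_add_conj_of_mem_span_fourier [Fact (0 < 2 * π)] (c : ℂ) {R : ℝ} (hR : R ≠ 0)
    {p : C(AddCircle (2 * π), ℂ)} (hp : p ∈ Submodule.span ℂ (range (fourier (T := 2 * π)))) :
    ∃ P Q : ℂ → ℂ, Differentiable ℂ P ∧ Differentiable ℂ Q ∧
      ∀ θ, p θ = P (c + R * θ.toCircle) + conj (Q (c + R * θ.toCircle)) := by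
  induction hp using Submodule.span_induction with
  | mem p hp =>
    have hpow (n : ℕ) (u : Circle) : ((c + R * u - c) / R : ℂ) ^ n = (u ^ n : Circle) := by
      simp [hR]
    have hdiff (n : ℕ) : Differentiable ℂ fun z : ℂ ↦ ((z - c) / R) ^ n := by fun_prop
    obtain ⟨n, rfl⟩ := hp
    obtain ⟨n, rfl | rfl⟩ := n.eq_nat_or_neg
    · refine ⟨_, 0, hdiff n, differentiable_const 0, fun θ ↦ ?_⟩
      simp only [hpow]
      simp [fourier_apply, AddCircle.toCircle_nsmul]
    · refine ⟨0, _, differentiable_const 0, hdiff n, fun θ ↦ ?_⟩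
      simp only [hpow, ← Circle.coe_inv_eq_conj]
      simp [AddCircle.toCircle_neg, AddCircle.toCircle_nsmul]
  | zero => exact ⟨0, 0, differentiable_const 0, differentiable_const 0, by simp⟩
  | add p q _ _ hp hq =>
    obtain ⟨P₁, Q₁, hP₁, hQ₁, h₁⟩ := hp
    obtain ⟨P₂, Q₂, hP₂, hQ₂, h₂⟩ := hq
    refine ⟨P₁ + P₂, Q₁ + Q₂, hP₁.add hP₂, hQ₁.add hQ₂, fun θ ↦ ?_⟩
    simp only [ContinuousMap.add_apply, h₁, h₂, Pi.add_apply, map_add]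
    ring
  | smul a p _ hp =>
    obtain ⟨P, Q, hP, hQ, h⟩ := hp
    refine ⟨a • P, conj a • Q, hP.const_smul _, hQ.const_smul _, fun θ ↦ ?_⟩
    simp only [ContinuousMap.smul_apply, h, Pi.smul_apply, smul_eq_mul, map_mul, conj_conj]
    ring

lemma exists_eq_add_mul_toCircle {c ζ : ℂ} {R : ℝ} (hR : 0 < R) (hζ : ζ ∈ sphere c R) :
    ∃ θ : AddCircle (2 * π), c + R * θ.toCircle = ζ := by
  have hu : (ζ - c) / R ∈ Submonoid.unitSphere ℂ := by
    rw [mem_sphere_iff_norm] at hζ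
    simp [Submonoid.unitSphere, hζ, abs_of_pos hR, hR.ne']
  obtain ⟨θ, hθ⟩ := (AddCircle.homeomorphCircle two_pi_pos.ne').surjective ⟨_, hu⟩
  refine ⟨θ, ?_⟩
  rw [← AddCircle.homeomorphCircle_apply two_pi_pos.ne', hθ]
  simp [mul_div_cancel₀, hR.ne']

-- Trigonometric polynomials have the harmonic extensions `P + conj Q`, whose real part is
-- `Re (P + Q)`; their density replaces the solution of the Dirichlet problem for continuous data.
lemma exists_differentiable_abs_sub_re_lt {c : ℂ} {R : ℝ} (hR : 0 < R) {v : ℂ → ℝ}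
    (hv : ContinuousOn v (sphere c R)) {ε : ℝ} (hε : 0 < ε) :
    ∃ P : ℂ → ℂ, Differentiable ℂ P ∧ ∀ ζ ∈ sphere c R, |v ζ - (P ζ).re| < ε := by
  have : Fact (0 < 2 * π) := ⟨two_pi_pos⟩
  have hmem (u : Circle) : c + R * u ∈ sphere c R := by simp [abs_of_pos hR, Circle.norm_coe]
  let f : C(AddCircle (2 * π), ℂ) :=
    ⟨fun θ ↦ v (c + R * θ.toCircle), continuous_ofReal.comp <|
      hv.comp_continuous (by fun_prop) fun θ ↦ hmem θ.toCircle⟩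
  have hf : f ∈ closure (Submodule.span ℂ (range (fourier (T := 2 * π))) : Set _) := by
    rw [← Submodule.topologicalClosure_coe, span_fourier_closure_eq_top]
    trivial
  obtain ⟨p, hp, hfp⟩ := mem_closure_iff.1 hf ε hε
  obtain ⟨P, Q, hP, hQ, hpPQ⟩ := exists_eq_add_conj_of_mem_span_fourier c hR.ne' hp
  refine ⟨P + Q, hP.add hQ, fun ζ hζ ↦ ?_⟩
  obtain ⟨θ, rfl⟩ := exists_eq_add_mul_toCircle hR hζ
  calc |v (c + R * θ.toCircle) - ((P + Q) (c + R * θ.toCircle)).re|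
      = |(f θ - p θ).re| := by simp [f, hpPQ]
    _ ≤ ‖f θ - p θ‖ := abs_re_le_norm _
    _ ≤ dist f p := by rw [← dist_eq_norm]; exact f.dist_apply_le_dist θ
    _ < ε := hfp

lemma continuousOn_poissonKernel_sphere {c w : ℂ} {R : ℝ} (hw : w ∈ ball c R) :
    ContinuousOn (poissonKernel c w) (sphere c R) := by
  have hR : |R| = R := abs_of_pos (pos_of_mem_ball hw)
  simpa only [poissonKernel_eq_re_herglotzRieszKernel, hR] using
    continuous_re.comp_continuousOn (continuousOn_herglotzRieszKernel_sphere hw)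

lemma poissonKernel_nonneg {c w ζ : ℂ} {R : ℝ} (hw : w ∈ ball c R) (hζ : ζ ∈ sphere c R) :
    0 ≤ poissonKernel c w ζ := by
  rw [mem_ball_iff_norm] at hw
  rw [mem_sphere_iff_norm] at hζ
  rw [poissonKernel, hζ]
  have : ‖w - c‖ ^ 2 ≤ R ^ 2 := by gcongr
  exact div_nonneg (sub_nonneg.2 this) (sq_nonneg _)

lemma circleAverage_poissonKernel_mul_re {P : ℂ → ℂ} {c w : ℂ} {R : ℝ}
    (hP : DiffContOnCl ℂ P (ball c R)) (hw : w ∈ ball c R) :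
    circleAverage (fun ζ ↦ poissonKernel c w ζ * (P ζ).re) c R = (P w).re := by
  have hR := pos_of_mem_ball hw
  have hint : CircleIntegrable (poissonKernel c w • P) c R :=
    ContinuousOn.circleIntegrable hR.le <| (continuousOn_poissonKernel_sphere hw).smul <|
      hP.continuousOn.mono <| by rw [closure_ball c hR.ne']; exact sphere_subset_closedBall
  rw [← hP.circleAverage_poissonKernel_smul hw, ← reCLM_apply,
    ← ContinuousLinearMap.circleAverage_comp_comm _ hint]
  congr 1 with ζ
  simp

variable {E : Type*} [NormedAddCommGroup E] [NormedSpace ℂ E]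

lemma norm_le_exp_re_of_forall_mem_sphere {F : ℂ → E} {P : ℂ → ℂ} {c w : ℂ} {R : ℝ}
    (hF : DiffContOnCl ℂ F (ball c R)) (hP : Differentiable ℂ P)
    (h : ∀ ζ ∈ sphere c R, ‖F ζ‖ ≤ Real.exp (P ζ).re) (hw : w ∈ ball c R) :
    ‖F w‖ ≤ Real.exp (P w).re := by
  have hnorm (z : ℂ) : ‖cexp (-P z) • F z‖ = ‖F z‖ / Real.exp (P z).re := by
    rw [norm_smul, norm_exp, neg_re, Real.exp_neg, div_eq_inv_mul]
  have hle : ‖cexp (-P w) • F w‖ ≤ 1 := by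
    refine norm_le_of_forall_mem_frontier_norm_le isBounded_ball
      (hP.neg.cexp.diffContOnCl.smul hF) (fun ζ hζ ↦ ?_) (subset_closure hw)
    rw [frontier_ball c (pos_of_mem_ball hw).ne'] at hζ
    exact (hnorm ζ).trans_le <| div_le_one_of_le₀ (h ζ hζ) (Real.exp_nonneg _)
  rwa [hnorm, div_le_one (Real.exp_pos _)] at hle

theorem norm_le_exp_circleAverage_poissonKernel_mul {F : ℂ → E} {v : ℂ → ℝ} {c w : ℂ} {R : ℝ}
    (hF : DiffContOnCl ℂ F (ball c R)) (hv : ContinuousOn v (sphere c R))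
    (hFv : ∀ ζ ∈ sphere c R, ‖F ζ‖ ≤ Real.exp (v ζ)) (hw : w ∈ ball c R) :
    ‖F w‖ ≤ Real.exp (circleAverage (fun ζ ↦ poissonKernel c w ζ * v ζ) c R) := by
  have hR := pos_of_mem_ball hw
  set A := circleAverage (fun ζ ↦ poissonKernel c w ζ * v ζ) c R
  suffices h : ∀ ε > 0, ‖F w‖ ≤ Real.exp (A + 2 * ε) by
    have hlim : Tendsto (fun ε ↦ Real.exp (A + 2 * ε)) (𝓝[>] 0) (𝓝 (Real.exp A)) :=
      tendsto_nhdsWithin_of_tendsto_nhds <| Continuous.tendsto' (by fun_prop) _ _ (by simp)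
    exact ge_of_tendsto hlim (eventually_mem_nhdsWithin.mono h)
  intro ε hε
  have hvε : ContinuousOn (fun ζ ↦ v ζ + ε) (sphere c R) := hv.fun_add continuousOn_const
  obtain ⟨P, hP, hvP⟩ := exists_differentiable_abs_sub_re_lt hR hvε hε
  have hvP (ζ : ℂ) (hζ : ζ ∈ sphere c R) : v ζ ≤ (P ζ).re ∧ (P ζ).re - 2 * ε ≤ v ζ := by
    have := abs_lt.1 (hvP ζ hζ)
    constructor <;> linarith
  have hPA : (P w - 2 * ε).re ≤ A := by
    have hPε : Differentiable ℂ fun z ↦ P z - 2 * ε := hP.sub_const _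
    have hK := continuousOn_poissonKernel_sphere hw
    have hPre : ContinuousOn (fun z ↦ (P z - 2 * ε).re) (sphere c R) :=
      (continuous_re.comp hPε.continuous).continuousOn
    rw [← circleAverage_poissonKernel_mul_re hPε.diffContOnCl hw]
    refine circleAverage_mono ((hK.fun_mul hPre).circleIntegrable hR.le)
      ((hK.fun_mul hv).circleIntegrable hR.le) fun ζ hζ ↦ ?_
    rw [abs_of_pos hR] at hζ
    refine mul_le_mul_of_nonneg_left ?_ (poissonKernel_nonneg hw hζ)
    simpa using (hvP ζ hζ).2
  calc ‖F w‖ ≤ Real.exp (P w).re := norm_le_exp_re_of_forall_mem_sphere hF hP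
        (fun ζ hζ ↦ (hFv ζ hζ).trans (Real.exp_le_exp.2 (hvP ζ hζ).1)) hw
    _ ≤ Real.exp (A + 2 * ε) := by
        gcongr
        simpa using hPA

end PoissonJensen

section HalfPlane

open Metric Real

variable {E E' : Type*} [NormedAddCommGroup E] [NormedSpace ℂ E]
  [NormedAddCommGroup E'] [NormedSpace ℂ E']

lemma div_four_mul_sq_le_poissonKernel {c w ζ : ℂ} {R : ℝ} (hw : w ∈ ball c R)
    (hζ : ζ ∈ sphere c R) : (R ^ 2 - ‖w - c‖ ^ 2) / (4 * R ^ 2) ≤ poissonKernel c w ζ := by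
  rw [mem_ball_iff_norm] at hw
  rw [mem_sphere_iff_norm] at hζ
  have hsq : ‖w - c‖ ^ 2 ≤ R ^ 2 := by gcongr
  have hpos : 0 < ‖(ζ - c) - (w - c)‖ := by
    linarith [norm_sub_norm_le (ζ - c) (w - c)]
  have hle : ‖(ζ - c) - (w - c)‖ ≤ 2 * R := by
    linarith [norm_sub_le (ζ - c) (w - c)]
  rw [poissonKernel, hζ]
  refine div_le_div_of_nonneg_left (sub_nonneg.2 hsq) (by positivity) ?_
  calc ‖(ζ - c) - (w - c)‖ ^ 2 ≤ (2 * R) ^ 2 := by gcongr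
    _ = 4 * R ^ 2 := by ring

lemma norm_le_exp_mul_circleAverage {F : ℂ → E} {v : ℂ → ℝ} {c w : ℂ} {R : ℝ}
    (hF : DiffContOnCl ℂ F (ball c R)) (hv : ContinuousOn v (sphere c R))
    (hv0 : ∀ ζ ∈ sphere c R, v ζ ≤ 0) (hFv : ∀ ζ ∈ sphere c R, ‖F ζ‖ ≤ Real.exp (v ζ))
    (hw : w ∈ ball c R) :
    ‖F w‖ ≤ Real.exp ((R ^ 2 - ‖w - c‖ ^ 2) / (4 * R ^ 2) * circleAverage v c R) := by
  have hR := pos_of_mem_ball hw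
  refine (norm_le_exp_circleAverage_poissonKernel_mul hF hv hFv hw).trans ?_
  rw [Real.exp_le_exp, ← smul_eq_mul, ← circleAverage_smul]
  refine circleAverage_mono
    (((continuousOn_poissonKernel_sphere hw).fun_mul hv).circleIntegrable hR.le)
    ((hv.const_smul _).circleIntegrable hR.le) fun ζ hζ ↦ ?_
  rw [abs_of_pos hR] at hζ
  exact mul_le_mul_of_nonpos_right (div_four_mul_sq_le_poissonKernel hw hζ) (hv0 ζ hζ)

/-- The logarithm truncated from below at `-M`; it keeps `log ‖F‖` continuous at the zeros
of `F`. -/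
noncomputable def truncLog (M x : ℝ) : ℝ := Real.log (max x (Real.exp (-M)))

lemma continuous_truncLog (M : ℝ) : Continuous (truncLog M) :=
  (continuous_id.max continuous_const).log fun _ ↦ (lt_max_of_lt_right (Real.exp_pos _)).ne'

lemma le_exp_truncLog (M x : ℝ) : x ≤ Real.exp (truncLog M x) := by
  rw [truncLog, Real.exp_log (lt_max_of_lt_right (Real.exp_pos _))]
  exact le_max_left _ _

lemma truncLog_nonpos {M x : ℝ} (hM : 0 ≤ M) (hx : x ≤ 1) : truncLog M x ≤ 0 :=
  Real.log_nonpos (le_max_of_le_right (Real.exp_nonneg _)) <|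
    max_le hx (Real.exp_le_one_iff.2 (neg_nonpos.2 hM))

lemma truncLog_add_truncLog_le {M x y t : ℝ} (hM : 0 ≤ M) (hx : x ≤ 1) (hy : y ≤ 1)
    (hxy : x * y ≤ Real.exp t) (ht : -M ≤ t) :
    truncLog M x + truncLog M y ≤ t := by
  have he := Real.exp_pos (-M)
  have he1 : Real.exp (-M) ≤ 1 := Real.exp_le_one_iff.2 (neg_nonpos.2 hM)
  have het : Real.exp (-M) ≤ Real.exp t := by gcongr
  have hmax {s : ℝ} : 0 < max s (Real.exp (-M)) := lt_max_of_lt_right he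
  rw [truncLog, truncLog, ← Real.log_mul hmax.ne' hmax.ne', Real.log_le_iff_le_exp (by positivity)]
  rcases max_cases x (Real.exp (-M)) with ⟨hx', -⟩ | ⟨hx', -⟩ <;>
  rcases max_cases y (Real.exp (-M)) with ⟨hy', -⟩ | ⟨hy', -⟩ <;>
  rw [hx', hy'] <;> nlinarith

lemma continuousOn_truncLog_norm {F : ℂ → E} {c : ℂ} {R : ℝ} (hR : 0 < R)
    (hF : DiffContOnCl ℂ F (ball c R)) (M : ℝ) :
    ContinuousOn (fun ζ ↦ truncLog M ‖F ζ‖) (sphere c R) := by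
  refine (continuous_truncLog M).comp_continuousOn (hF.continuousOn.norm.mono ?_)
  rw [closure_ball c hR.ne']
  exact sphere_subset_closedBall

lemma norm_le_of_circleAverage_truncLog_le {F : ℂ → E} {c w : ℂ} {R M a : ℝ} (hM : 0 ≤ M)
    (hF : DiffContOnCl ℂ F (ball c R)) (hF1 : ∀ ζ ∈ sphere c R, ‖F ζ‖ ≤ 1)
    (ha : circleAverage (fun ζ ↦ truncLog M ‖F ζ‖) c R ≤ a) (hw : w ∈ ball c R) :
    ‖F w‖ ≤ Real.exp ((R ^ 2 - ‖w - c‖ ^ 2) / (4 * R ^ 2) * a) := by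
  have hwR : ‖w - c‖ ^ 2 ≤ R ^ 2 := by
    gcongr
    exact (mem_ball_iff_norm.1 hw).le
  refine (norm_le_exp_mul_circleAverage hF
    (continuousOn_truncLog_norm (pos_of_mem_ball hw) hF M)
    (fun ζ hζ ↦ truncLog_nonpos hM (hF1 ζ hζ)) (fun ζ _ ↦ le_exp_truncLog M _) hw).trans ?_
  have := div_nonneg (sub_nonneg.2 hwR) (by positivity : 0 ≤ 4 * R ^ 2)
  gcongr

lemma norm_le_or_norm_le_of_norm_mul_norm_le {F : ℂ → E} {G : ℂ → E'} {u : ℂ → ℝ} {c : ℂ} {R : ℝ}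
    (hR : 0 < R) (hF : DiffContOnCl ℂ F (ball c R)) (hG : DiffContOnCl ℂ G (ball c R))
    (hF1 : ∀ ζ ∈ sphere c R, ‖F ζ‖ ≤ 1) (hG1 : ∀ ζ ∈ sphere c R, ‖G ζ‖ ≤ 1)
    (hu : ContinuousOn u (sphere c R))
    (hFG : ∀ ζ ∈ sphere c R, ‖F ζ‖ * ‖G ζ‖ ≤ Real.exp (u ζ)) :
    (∀ w ∈ ball c R, ‖F w‖ ≤
      Real.exp ((R ^ 2 - ‖w - c‖ ^ 2) / (4 * R ^ 2) * (circleAverage u c R / 2))) ∨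
    (∀ w ∈ ball c R, ‖G w‖ ≤
      Real.exp ((R ^ 2 - ‖w - c‖ ^ 2) / (4 * R ^ 2) * (circleAverage u c R / 2))) := by
  obtain ⟨M, hM⟩ := ((isCompact_sphere c R).image_of_continuousOn hu).bddBelow
  have huM (ζ : ℂ) (hζ : ζ ∈ sphere c R) : -(max (-M) 0) ≤ u ζ :=
    (neg_le.1 (le_max_left _ _)).trans (hM (mem_image_of_mem u hζ))
  have hM0 : 0 ≤ max (-M) 0 := le_max_right _ _
  generalize max (-M) 0 = N at huM hM0
  have hintF := (continuousOn_truncLog_norm hR hF N).circleIntegrable hR.le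
  have hintG := (continuousOn_truncLog_norm hR hG N).circleIntegrable hR.le
  have hadd : circleAverage (fun ζ ↦ truncLog N ‖F ζ‖) c R
      + circleAverage (fun ζ ↦ truncLog N ‖G ζ‖) c R ≤ circleAverage u c R := by
    rw [← circleAverage_add hintF hintG]
    refine circleAverage_mono (hintF.add hintG) (hu.circleIntegrable hR.le) fun ζ hζ ↦ ?_
    rw [abs_of_pos hR] at hζ
    exact truncLog_add_truncLog_le hM0 (hF1 ζ hζ) (hG1 ζ hζ) (hFG ζ hζ) (huM ζ hζ)
  rcases le_or_gt (circleAverage (fun ζ ↦ truncLog N ‖F ζ‖) c R) (circleAverage u c R / 2)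
    with h | h
  · exact .inl fun w ↦ norm_le_of_circleAverage_truncLog_le hM0 hF hF1 h
  · exact .inr fun w ↦ norm_le_of_circleAverage_truncLog_le hM0 hG hG1 (by linarith)

/-- `F` extends continuously to the real line from an analytic function on the upper half-plane
and `‖F z‖ ≤ exp (-α * Im z)` there. The supremum of such `α` plays the role of the left end of
the support of the function whose Fourier–Laplace transform is `F`. -/
structure HalfPlaneDecay (F : ℂ → E) (α : ℝ) : Prop where
  diffContOnCl : DiffContOnCl ℂ F {z | 0 < z.im}
  norm_le : ∀ z : ℂ, 0 ≤ z.im → ‖F z‖ ≤ Real.exp (-(α * z.im))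

namespace HalfPlaneDecay

lemma exp_smul {F : ℂ → E} {α : ℝ} (h : HalfPlaneDecay F α) (β : ℝ) :
    HalfPlaneDecay (fun z ↦ cexp (I * β * z) • F z) (α + β) where
  diffContOnCl := by
    have hexp : Differentiable ℂ fun z ↦ cexp (I * β * z) := by fun_prop
    exact hexp.diffContOnCl.smul h.diffContOnCl
  norm_le z hz := by
    calc ‖cexp (I * β * z) • F z‖ = Real.exp (-(β * z.im)) * ‖F z‖ := by
          simp [norm_smul, norm_exp]
      _ ≤ Real.exp (-(β * z.im)) * Real.exp (-(α * z.im)) := by gcongr; exact h.norm_le z hz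
      _ = Real.exp (-((α + β) * z.im)) := by rw [← Real.exp_add]; ring_nf

lemma of_exp_smul {F : ℂ → E} {α β : ℝ}
    (h : HalfPlaneDecay (fun z ↦ cexp (I * β * z) • F z) α) : HalfPlaneDecay F (α - β) := by
  simpa [smul_smul, ← Complex.exp_add, sub_eq_add_neg] using h.exp_smul (-β)

lemma isClosed_setOf (F : ℂ → E) : IsClosed {α | HalfPlaneDecay F α} := by
  by_cases hF : DiffContOnCl ℂ F {z | 0 < z.im}
  · have : {α | HalfPlaneDecay F α} =
        ⋂ (z : ℂ) (_ : 0 ≤ z.im), {α | ‖F z‖ ≤ Real.exp (-(α * z.im))} := by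
      ext α
      simpa using ⟨fun h ↦ h.norm_le, fun h ↦ ⟨hF, h⟩⟩
    rw [this]
    exact isClosed_biInter fun z _ ↦ isClosed_le continuous_const (by fun_prop)
  · have : {α | HalfPlaneDecay F α} = ∅ := eq_empty_of_forall_notMem fun α h ↦ hF h.diffContOnCl
    rw [this]
    exact isClosed_empty

end HalfPlaneDecay

lemma closedBall_mul_I_subset (ρ : ℝ) : closedBall (ρ * I) ρ ⊆ {z | 0 ≤ z.im} := by
  intro z hz
  have := (abs_im_le_norm (z - ρ * I)).trans (mem_closedBall_iff_norm.1 hz)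
  simp only [sub_im, mul_im, ofReal_re, ofReal_im, I_re, I_im] at this
  have := (abs_le.1 this).1
  simp only [mem_ofPred_eq]
  linarith

lemma ball_mul_I_subset (ρ : ℝ) : ball (ρ * I) ρ ⊆ {z | 0 < z.im} := by
  intro z hz
  have := (abs_im_le_norm (z - ρ * I)).trans_lt (mem_ball_iff_norm.1 hz)
  simp only [sub_im, mul_im, ofReal_re, ofReal_im, I_re, I_im] at this
  have := (abs_lt.1 this).1
  simp only [mem_ofPred_eq]
  linarith

lemma sq_sub_norm_sub_mul_I_sq (ρ : ℝ) (z : ℂ) :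
    ρ ^ 2 - ‖z - ρ * I‖ ^ 2 = 2 * ρ * z.im - ‖z‖ ^ 2 := by
  rw [← normSq_eq_norm_sq, ← normSq_eq_norm_sq, normSq_apply, normSq_apply]
  simp only [sub_re, mul_re, ofReal_re, I_re, mul_zero, ofReal_im, I_im, mul_one, sub_self,
    sub_zero, sub_im, mul_im, add_zero]
  ring

lemma circleAverage_im (c : ℂ) (R : ℝ) : circleAverage Complex.im c R = c.im := by
  have hint : CircleIntegrable id c R := continuous_id.continuousOn.circleIntegrable'
  calc circleAverage Complex.im c R = circleAverage (imCLM ∘ id) c R := rfl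
    _ = (circleAverage id c R).im := ContinuousLinearMap.circleAverage_comp_comm imCLM hint
    _ = c.im := by rw [differentiable_id.diffContOnCl.circleAverage, id]

namespace HalfPlaneDecay

variable {F : ℂ → E} {G : ℂ → E'} {T : ℝ}

lemma norm_le_or_norm_le_of_mem_ball (hF : HalfPlaneDecay F 0) (hG : HalfPlaneDecay G 0)
    (hFG : ∀ z : ℂ, 0 ≤ z.im → ‖F z‖ * ‖G z‖ ≤ Real.exp (-(T * z.im))) {ρ : ℝ} (hρ : 0 < ρ) :
    (∀ z ∈ ball (ρ * I) ρ, ‖F z‖ ≤ Real.exp (-(T / 8 * (2 * z.im - ‖z‖ ^ 2 / ρ)))) ∨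
    (∀ z ∈ ball (ρ * I) ρ, ‖G z‖ ≤ Real.exp (-(T / 8 * (2 * z.im - ‖z‖ ^ 2 / ρ)))) := by
  have him {ζ : ℂ} (hζ : ζ ∈ sphere (ρ * I) ρ) : 0 ≤ ζ.im :=
    closedBall_mul_I_subset ρ (sphere_subset_closedBall hζ)
  have havg : circleAverage (-T • Complex.im) (ρ * I) ρ = -(T * ρ) := by
    rw [circleAverage_smul, circleAverage_im]
    simp
  have hexponent (z : ℂ) : (ρ ^ 2 - ‖z - ρ * I‖ ^ 2) / (4 * ρ ^ 2) * (-(T * ρ) / 2)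
      = -(T / 8 * (2 * z.im - ‖z‖ ^ 2 / ρ)) := by
    rw [sq_sub_norm_sub_mul_I_sq]
    field_simp
    ring
  simpa only [havg, hexponent] using
    norm_le_or_norm_le_of_norm_mul_norm_le (u := -T • Complex.im) hρ
      (hF.diffContOnCl.mono (ball_mul_I_subset ρ)) (hG.diffContOnCl.mono (ball_mul_I_subset ρ))
      (fun ζ hζ ↦ by simpa using hF.norm_le ζ (him hζ))
      (fun ζ hζ ↦ by simpa using hG.norm_le ζ (him hζ))
      (continuous_im.const_smul (-T)).continuousOn
      (fun ζ hζ ↦ by simpa using hFG ζ (him hζ))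

lemma of_frequently (hF : HalfPlaneDecay F 0)
    (h : ∃ᶠ ρ : ℝ in atTop, ∀ z ∈ ball (ρ * I) ρ,
      ‖F z‖ ≤ Real.exp (-(T / 8 * (2 * z.im - ‖z‖ ^ 2 / ρ)))) :
    HalfPlaneDecay F (T / 4) where
  diffContOnCl := hF.diffContOnCl
  norm_le z hz := by
    rcases hz.eq_or_lt with hz | hz
    · simpa [← hz] using hF.norm_le z hz.le
    have hlim : Tendsto (fun ρ : ℝ ↦ Real.exp (-(T / 8 * (2 * z.im - ‖z‖ ^ 2 / ρ)))) atTop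
        (𝓝 (Real.exp (-(T / 4 * z.im)))) := by
      have := (tendsto_const_nhds (x := ‖z‖ ^ 2)).div_atTop (tendsto_id (α := ℝ))
      have := ((this.const_sub (2 * z.im)).const_mul (T / 8)).neg.rexp
      rwa [show T / 8 * (2 * z.im - 0) = T / 4 * z.im by ring] at this
    have hmem : ∀ᶠ ρ : ℝ in atTop, z ∈ ball (ρ * I) ρ := by
      filter_upwards [eventually_gt_atTop (‖z‖ ^ 2 / (2 * z.im)), eventually_gt_atTop 0]
        with ρ hzρ hρ
      rw [div_lt_iff₀ (by positivity)] at hzρ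
      rw [mem_ball_iff_norm]
      refine lt_of_pow_lt_pow_left₀ 2 hρ.le ?_
      linarith [sq_sub_norm_sub_mul_I_sq ρ z]
    exact ge_of_tendsto_of_frequently hlim ((h.and_eventually hmem).mono fun ρ hρ ↦ hρ.1 z hρ.2)

lemma div_four_or_div_four (hF : HalfPlaneDecay F 0) (hG : HalfPlaneDecay G 0)
    (hFG : ∀ z : ℂ, 0 ≤ z.im → ‖F z‖ * ‖G z‖ ≤ Real.exp (-(T * z.im))) :
    HalfPlaneDecay F (T / 4) ∨ HalfPlaneDecay G (T / 4) := by
  have hev := (eventually_gt_atTop (0 : ℝ)).mono fun ρ ↦ norm_le_or_norm_le_of_mem_ball hF hG hFG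
  exact (frequently_or_distrib.1 hev.frequently).imp hF.of_frequently hG.of_frequently

lemma add_div_four_or_add_div_four {α β : ℝ} (hF : HalfPlaneDecay F α) (hG : HalfPlaneDecay G β)
    (hFG : ∀ z : ℂ, 0 ≤ z.im → ‖F z‖ * ‖G z‖ ≤ Real.exp (-(T * z.im))) :
    HalfPlaneDecay F (α + (T - α - β) / 4) ∨ HalfPlaneDecay G (β + (T - α - β) / 4) := by
  have hF0 := hF.exp_smul (-α)
  have hG0 := hG.exp_smul (-β)
  rw [add_neg_cancel] at hF0 hG0
  have hFG0 (z : ℂ) (hz : 0 ≤ z.im) :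
      ‖cexp (I * (-α : ℝ) * z) • F z‖ * ‖cexp (I * (-β : ℝ) * z) • G z‖
        ≤ Real.exp (-((T - α - β) * z.im)) := by
    calc _ = Real.exp ((α + β) * z.im) * (‖F z‖ * ‖G z‖) := by
          simp only [ofReal_neg, mul_neg, neg_mul, norm_smul, norm_exp, neg_re, mul_re, I_re,
            ofReal_re, zero_mul, I_im, ofReal_im, mul_zero, sub_self, mul_im, one_mul, zero_add,
            zero_sub, neg_neg, add_mul, Real.exp_add]
          ring
      _ ≤ Real.exp ((α + β) * z.im) * Real.exp (-(T * z.im)) := by gcongr; exact hFG z hz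
      _ = Real.exp (-((T - α - β) * z.im)) := by rw [← Real.exp_add]; ring_nf
  refine (div_four_or_div_four hF0 hG0 hFG0).imp (fun h ↦ ?_) fun h ↦ ?_
  · simpa [add_comm] using h.of_exp_smul
  · simpa [add_comm] using h.of_exp_smul

lemma exists_isGreatest (hF : HalfPlaneDecay F 0) (hT : 0 ≤ T) :
    ∃ α, IsGreatest (Icc 0 T ∩ {α | HalfPlaneDecay F α}) α :=
  (isCompact_Icc.inter_right (isClosed_setOf F)).exists_isGreatest ⟨0, ⟨le_rfl, hT⟩, hF⟩

theorem exists_le_add (hF : HalfPlaneDecay F 0) (hG : HalfPlaneDecay G 0) (hT : 0 ≤ T)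
    (hFG : ∀ z : ℂ, 0 ≤ z.im → ‖F z‖ * ‖G z‖ ≤ Real.exp (-(T * z.im))) :
    ∃ α ∈ Icc 0 T, ∃ β ∈ Icc 0 T, T ≤ α + β ∧ HalfPlaneDecay F α ∧ HalfPlaneDecay G β := by
  obtain ⟨α, ⟨hα, hFα⟩, hα_max⟩ := hF.exists_isGreatest hT
  obtain ⟨β, ⟨hβ, hGβ⟩, hβ_max⟩ := hG.exists_isGreatest hT
  refine ⟨α, hα, β, hβ, ?_, hFα, hGβ⟩
  by_contra! hlt
  have hα0 := hα.1
  have hβ0 := hβ.1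
  rcases add_div_four_or_add_div_four hFα hGβ hFG with h | h
  · linarith [hα_max ⟨⟨by linarith, by linarith⟩, h⟩]
  · linarith [hβ_max ⟨⟨by linarith, by linarith⟩, h⟩]

end HalfPlaneDecay

end HalfPlane

section FourierLaplace

open scoped FourierTransform

lemma integrable_smul_of_hasCompactSupport {X 𝕜 E : Type*} [TopologicalSpace X] [MeasurableSpace X]
    [OpensMeasurableSpace X] [T2Space X] {μ : Measure X} [NormedAddCommGroup E] [NormedRing 𝕜]
    [SecondCountableTopologyEither X 𝕜] [Module 𝕜 E] [IsBoundedSMul 𝕜 E] {f : X → E}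
    (hf : Integrable f μ) (hf_supp : HasCompactSupport f) {φ : X → 𝕜} (hφ : Continuous φ) :
    Integrable (fun t ↦ φ t • f t) μ := by
  have hsub : (Function.support fun t ↦ φ t • f t) ⊆ tsupport f :=
    (Function.support_smul_subset_right φ f).trans (subset_tsupport f)
  exact (integrableOn_iff_integrable_of_support_subset hsub).1
    (hf.integrableOn.continuousOn_smul hφ.continuousOn hf_supp)

variable {E : Type*} [NormedAddCommGroup E] [NormedSpace ℂ E] {f : ℝ → E}

lemma ae_eq_zero_of_fourier_eq_zero {V : Type*} [NormedAddCommGroup V] [InnerProductSpace ℝ V]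
    [FiniteDimensional ℝ V] [MeasurableSpace V] [BorelSpace V] [CompleteSpace E] {f : V → E}
    (hf : Integrable f) (h : 𝓕 f = 0) : f =ᵐ[volume] 0 := by
  refine ae_eq_zero_of_integral_contDiff_smul_eq_zero hf.locallyIntegrable
    fun g hg hg_supp ↦ ?_
  have hsupp : HasCompactSupport (ofRealCLM ∘ g) := hg_supp.comp_left rfl
  let G := 𝓕⁻ (hsupp.toSchwartzMap (ofRealCLM.contDiff.comp hg))
  have hG (x : V) : 𝓕 (G : V → ℂ) x = g x := by
    rw [← SchwartzMap.fourier_coe, FourierTransform.fourier_fourierInv_eq]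
    simp
  have hparseval : ∫ x, 𝓕 (G : V → ℂ) x • f x = ∫ x, G x • 𝓕 f x := by
    simpa using! VectorFourier.integral_fourierIntegral_smul_eq_flip (L := innerₗ V)
      Real.continuous_fourierChar continuous_inner G.integrable hf
  simpa [hG, h] using hparseval

/-- The Fourier–Laplace transform `z ↦ ∫ f(t) exp(izt) dt`. With this sign, a function supported in
`[0, ∞)` has a bounded transform in the upper half-plane. -/
noncomputable def fourierLaplace (f : ℝ → E) (z : ℂ) : E := ∫ t : ℝ, cexp (I * z * t) • f t

lemma norm_cexp_I_mul_mul_ofReal (z : ℂ) (t : ℝ) :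
    ‖cexp (I * z * t)‖ = Real.exp (-(z.im * t)) := by
  simp [norm_exp]

lemma integrable_cexp_smul (hf : Integrable f) (hf_supp : HasCompactSupport f) (z : ℂ) :
    Integrable fun t : ℝ ↦ cexp (I * z * t) • f t :=
  integrable_smul_of_hasCompactSupport hf hf_supp (by fun_prop)

lemma norm_fourierLaplace_le (hf : Integrable f) {z : ℂ} {b : ℝ}
    (hb : ∀ᵐ t, f t ≠ 0 → b ≤ z.im * t) :
    ‖fourierLaplace f z‖ ≤ Real.exp (-b) * ∫ t, ‖f t‖ := by
  rw [← integral_const_mul]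
  refine norm_integral_le_of_norm_le (hf.norm.const_mul _) (hb.mono fun t ht ↦ ?_)
  by_cases hft : f t = 0
  · simp [hft]
  rw [norm_smul, norm_cexp_I_mul_mul_ofReal]
  gcongr
  exact ht hft

lemma norm_fourierLaplace_le_exp_mul (hf : Integrable f) {α : ℝ} (hf0 : ∀ᵐ t, t ≤ α → f t = 0)
    {z : ℂ} (hz : 0 ≤ z.im) :
    ‖fourierLaplace f z‖ ≤ Real.exp (-(α * z.im)) * ∫ t, ‖f t‖ := by
  refine norm_fourierLaplace_le hf (hf0.mono fun t ht hft ↦ ?_)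
  rw [mul_comm]
  exact mul_le_mul_of_nonneg_left (not_le.1 (mt ht hft)).le hz

lemma fourierLaplace_add {g : ℝ → E} (hf : Integrable f) (hf_supp : HasCompactSupport f)
    (hg : Integrable g) (hg_supp : HasCompactSupport g) (z : ℂ) :
    fourierLaplace (f + g) z = fourierLaplace f z + fourierLaplace g z := by
  simp only [fourierLaplace, Pi.add_apply, smul_add]
  exact integral_add (integrable_cexp_smul hf hf_supp z) (integrable_cexp_smul hg hg_supp z)

lemma fourierLaplace_comp_add_right (f : ℝ → E) (a : ℝ) (z : ℂ) :
    fourierLaplace (fun t ↦ f (t + a)) z = cexp (-(I * z * a)) • fourierLaplace f z := by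
  rw [fourierLaplace, fourierLaplace, ← integral_smul,
    ← integral_add_right_eq_self (fun t : ℝ ↦ cexp (-(I * z * a)) • cexp (I * z * t) • f t) a]
  congr 1 with t
  rw [smul_smul, ← Complex.exp_add]
  push_cast
  ring_nf

lemma differentiable_fourierLaplace (hf : Integrable f) (hf_supp : HasCompactSupport f) :
    Differentiable ℂ (fourierLaplace f) := by
  intro z₀
  refine (hasDerivAt_integral_of_dominated_loc_of_deriv_le
    (F' := fun z (t : ℝ) ↦ (cexp (I * z * t) * (I * t)) • f t)
    (bound := fun t ↦ (Real.exp ((‖z₀‖ + 1) * |t|) * |t|) • ‖f t‖)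
    (Metric.ball_mem_nhds z₀ one_pos)
    (.of_forall fun z ↦ (integrable_cexp_smul hf hf_supp z).aestronglyMeasurable)
    (integrable_cexp_smul hf hf_supp z₀)
    (integrable_smul_of_hasCompactSupport hf hf_supp (by fun_prop)).aestronglyMeasurable
    (.of_forall fun t z hz ↦ ?_)
    (integrable_smul_of_hasCompactSupport hf.norm hf_supp.norm (by fun_prop))
    (.of_forall fun t z _ ↦ ?_)).2.differentiableAt
  · have hz' : ‖z‖ ≤ ‖z₀‖ + 1 := by
      linarith [mem_ball_iff_norm.1 hz, norm_sub_norm_le z z₀]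
    have hexp : -(z.im * t) ≤ (‖z₀‖ + 1) * |t| := by
      calc -(z.im * t) ≤ |z.im| * |t| := by rw [← abs_mul]; exact neg_le_abs _
        _ ≤ (‖z₀‖ + 1) * |t| := by
          gcongr
          exact (abs_im_le_norm z).trans hz'
    rw [norm_smul, norm_mul, norm_cexp_I_mul_mul_ofReal, norm_mul, norm_I, one_mul, norm_real,
      Real.norm_eq_abs, smul_eq_mul]
    gcongr
  · have hlin : HasDerivAt (fun z ↦ I * z * t) (I * t) z := by
      simpa using ((hasDerivAt_id z).const_mul I).mul_const (t : ℂ)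
    exact hlin.cexp.smul_const (f t)

lemma ae_eq_zero_of_fourierLaplace_ofReal_eq_zero [CompleteSpace E] (hf : Integrable f)
    (h : ∀ x : ℝ, fourierLaplace f x = 0) : f =ᵐ[volume] 0 := by
  refine ae_eq_zero_of_fourier_eq_zero hf (funext fun w ↦ ?_)
  rw [Real.fourier_real_eq_integral_exp_smul, Pi.zero_apply, ← h (-2 * Real.pi * w),
    fourierLaplace]
  congr with t
  push_cast
  ring_nf

lemma tendsto_fourierLaplace_neg_mul_I (hf : Integrable f) (hf0 : ∀ t, 0 < t → f t = 0) :
    Tendsto (fun y : ℝ ↦ fourierLaplace f (-y * I)) atTop (𝓝 0) := by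
  have hexp (y t : ℝ) : cexp (I * (-y * I) * t) = Real.exp (y * t) := by
    push_cast
    congr 1
    linear_combination (-y * t : ℂ) * I_sq
  simp only [fourierLaplace, hexp]
  rw [← integral_zero ℝ E]
  refine tendsto_integral_filter_of_dominated_convergence (fun t ↦ ‖f t‖)
    (.of_forall fun y ↦ ?_) ?_ hf.norm ?_
  · exact (by fun_prop : Continuous fun t : ℝ ↦ (Real.exp (y * t) : ℂ)).aestronglyMeasurable.smul
      hf.aestronglyMeasurable
  · filter_upwards [eventually_ge_atTop 0] with y hy
    refine .of_forall fun t ↦ ?_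
    rcases le_or_gt t 0 with ht | ht
    · rw [norm_smul, norm_real, Real.norm_eq_abs, Real.abs_exp]
      exact mul_le_of_le_one_left (norm_nonneg _)
        (Real.exp_le_one_iff.2 (mul_nonpos_of_nonneg_of_nonpos hy ht))
    · simp [hf0 t ht]
  · filter_upwards [Measure.ae_ne volume 0] with t ht
    rcases ht.lt_or_gt with ht | ht
    · have hlim := Real.tendsto_exp_atBot.comp (tendsto_id.atTop_mul_const_of_neg ht)
      simpa using (continuous_ofReal.tendsto' 0 0 rfl |>.comp hlim).smul_const (f t)
    · simp [hf0 t ht]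

-- The part of `f` on `(-∞, 0]` has a transform bounded in both half-planes, hence constant by
-- Liouville, and the constant is its limit `0` along the negative imaginary axis.
lemma ae_eq_zero_of_norm_fourierLaplace_le [CompleteSpace E] (hf : Integrable f)
    (hf_supp : HasCompactSupport f) {C : ℝ} (hC : ∀ z : ℂ, 0 ≤ z.im → ‖fourierLaplace f z‖ ≤ C) :
    ∀ᵐ t, t ≤ 0 → f t = 0 := by
  set f₁ := (Iic 0).indicator f with hf₁_def
  set f₂ := (Ioi 0).indicator f with hf₂_def
  have hf₁ : Integrable f₁ := hf.indicator measurableSet_Iic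
  have hf₂ : Integrable f₂ := hf.indicator measurableSet_Ioi
  have hf₁_supp : HasCompactSupport f₁ := hf_supp.mono (by simp [f₁, support_indicator])
  have hf₂_supp : HasCompactSupport f₂ := hf_supp.mono (by simp [f₂, support_indicator])
  have hf₁0 (t : ℝ) (ht : 0 < t) : f₁ t = 0 := indicator_of_notMem (notMem_Iic.2 ht) f
  have hsplit (z : ℂ) : fourierLaplace f₁ z = fourierLaplace f z - fourierLaplace f₂ z := by
    rw [eq_sub_iff_add_eq, ← fourierLaplace_add hf₁ hf₁_supp hf₂ hf₂_supp, hf₁_def, hf₂_def,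
      ← compl_Iic, indicator_self_add_compl]
  have hupper (z : ℂ) (hz : 0 ≤ z.im) : ‖fourierLaplace f₁ z‖ ≤ C + ∫ t, ‖f₂ t‖ := by
    have hle := norm_fourierLaplace_le (z := z) (b := 0) hf₂ <| .of_forall fun t ht ↦
      mul_nonneg hz (mem_of_indicator_ne_zero ht).le
    rw [neg_zero, Real.exp_zero, one_mul] at hle
    rw [hsplit]
    exact (norm_sub_le _ _).trans (add_le_add (hC z hz) hle)
  have hlower (z : ℂ) (hz : z.im ≤ 0) : ‖fourierLaplace f₁ z‖ ≤ ∫ t, ‖f₁ t‖ := by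
    have hle := norm_fourierLaplace_le (z := z) (b := 0) hf₁ <| .of_forall fun t ht ↦
      mul_nonneg_of_nonpos_of_nonpos hz (not_lt.1 (mt (hf₁0 t) ht))
    rwa [neg_zero, Real.exp_zero, one_mul] at hle
  have hbdd : Bornology.IsBounded (range (fourierLaplace f₁)) :=
    isBounded_iff_forall_norm_le.2 ⟨max (C + ∫ t, ‖f₂ t‖) (∫ t, ‖f₁ t‖), forall_mem_range.2 fun z ↦
      (le_total 0 z.im).elim (fun hz ↦ le_max_of_le_left (hupper z hz))
        fun hz ↦ le_max_of_le_right (hlower z hz)⟩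
  obtain ⟨c, hc⟩ :=
    (differentiable_fourierLaplace hf₁ hf₁_supp).exists_const_forall_eq_of_bounded hbdd
  have hc0 : c = 0 := tendsto_const_nhds_iff.1 <| by
    simpa only [hc] using tendsto_fourierLaplace_neg_mul_I hf₁ hf₁0
  filter_upwards [ae_eq_zero_of_fourierLaplace_ofReal_eq_zero hf₁ fun x ↦ (hc x).trans hc0]
    with t ht htle
  rwa [hf₁_def, indicator_of_mem (mem_Iic.2 htle)] at ht

theorem ae_eq_zero_of_norm_fourierLaplace_le_mul_exp [CompleteSpace E] (hf : Integrable f)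
    (hf_supp : HasCompactSupport f) {α C : ℝ}
    (hC : ∀ z : ℂ, 0 ≤ z.im → ‖fourierLaplace f z‖ ≤ C * Real.exp (-(α * z.im))) :
    ∀ᵐ t, t ≤ α → f t = 0 := by
  have hshift : ∀ᵐ t, t ≤ 0 → f (t + α) = 0 := by
    refine ae_eq_zero_of_norm_fourierLaplace_le (C := C) (hf.comp_add_right α)
      (hf_supp.comp_homeomorph (Homeomorph.addRight α)) fun z hz ↦ ?_
    have hnorm : ‖cexp (-(I * z * α))‖ = Real.exp (α * z.im) := by
      simp [norm_exp, mul_comm]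
    rw [fourierLaplace_comp_add_right, norm_smul, hnorm]
    calc Real.exp (α * z.im) * ‖fourierLaplace f z‖
        ≤ Real.exp (α * z.im) * (C * Real.exp (-(α * z.im))) := by gcongr; exact hC z hz
      _ = C := by rw [mul_left_comm, ← Real.exp_add]; simp
  filter_upwards [(measurePreserving_sub_right volume α).quasiMeasurePreserving.ae hshift]
    with t ht htα
  simpa using ht (sub_nonpos.2 htα)

theorem halfPlaneDecay_inv_smul_fourierLaplace_iff [CompleteSpace E] (hf : Integrable f)
    (hf_supp : HasCompactSupport f) {α C : ℝ} (hC : 0 < C) (hfC : ∫ t, ‖f t‖ ≤ C) :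
    HalfPlaneDecay (fun z ↦ (C⁻¹ : ℂ) • fourierLaplace f z) α ↔ ∀ᵐ t, t ≤ α → f t = 0 := by
  have hnorm (z : ℂ) : ‖(C⁻¹ : ℂ) • fourierLaplace f z‖ = C⁻¹ * ‖fourierLaplace f z‖ := by
    simp [norm_smul, abs_of_pos hC]
  refine ⟨fun h ↦ ae_eq_zero_of_norm_fourierLaplace_le_mul_exp hf hf_supp (C := C) fun z hz ↦ ?_,
    fun h ↦ ⟨((differentiable_fourierLaplace hf hf_supp).const_smul _).diffContOnCl,
      fun z hz ↦ ?_⟩⟩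
  · rw [← inv_mul_le_iff₀ hC, ← hnorm]
    exact h.norm_le z hz
  · rw [hnorm, inv_mul_le_iff₀ hC, mul_comm C]
    exact (norm_fourierLaplace_le_exp_mul hf h hz).trans (by gcongr)

end FourierLaplace

section Convolution

open scoped Convolution

variable {E E' F : Type*} [NormedAddCommGroup E] [NormedSpace ℂ E]
  [NormedAddCommGroup E'] [NormedSpace ℂ E'] [NormedAddCommGroup F] [NormedSpace ℂ F]
  {f : ℝ → E} {g : ℝ → E'} (L : E →L[ℂ] E' →L[ℂ] F)

lemma fourierLaplace_convolution [CompleteSpace E] [CompleteSpace E'] [CompleteSpace F]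
    (hf : Integrable f) (hf_supp : HasCompactSupport f) (hg : Integrable g)
    (hg_supp : HasCompactSupport g) (z : ℂ) :
    fourierLaplace (f ⋆[L, volume] g) z = L (fourierLaplace f z) (fourierLaplace g z) := by
  refine Eq.trans (integral_congr_ae (.of_forall fun s ↦ ?_)) <|
    integral_convolution L (integrable_cexp_smul hf hf_supp z) (integrable_cexp_smul hg hg_supp z)
  simp only [convolution, ← integral_smul]
  congr with t
  rw [map_smul, map_smul, _root_.smul_apply, smul_smul, ← Complex.exp_add]
  push_cast
  ring_nf

theorem exists_le_add_of_convolution_eq_zero [CompleteSpace E] [CompleteSpace E'] [CompleteSpace F]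
    (hL : ∀ x y, ‖x‖ * ‖y‖ ≤ ‖L x y‖) (hf : Integrable f) (hf_supp : HasCompactSupport f)
    (hg : Integrable g) (hg_supp : HasCompactSupport g) (hf0 : ∀ᵐ t, t ≤ 0 → f t = 0)
    (hg0 : ∀ᵐ t, t ≤ 0 → g t = 0) {T : ℝ} (hT : 0 ≤ T)
    (hfg : ∀ᵐ t, t ≤ T → (f ⋆[L, volume] g) t = 0) :
    ∃ α ∈ Icc 0 T, ∃ β ∈ Icc 0 T, T ≤ α + β ∧
      (∀ᵐ t, t ≤ α → f t = 0) ∧ ∀ᵐ t, t ≤ β → g t = 0 := by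
  set If := ∫ t, ‖f t‖
  set Ig := ∫ t, ‖g t‖
  set Ifg := ∫ t, ‖(f ⋆[L, volume] g) t‖
  have hIf : 0 ≤ If := integral_nonneg fun _ ↦ norm_nonneg _
  have hIg : 0 ≤ Ig := integral_nonneg fun _ ↦ norm_nonneg _
  have hIfg : 0 ≤ Ifg := integral_nonneg fun _ ↦ norm_nonneg _
  obtain ⟨C, hC⟩ : ∃ C, C = 1 + If + Ig + Ifg := ⟨_, rfl⟩
  have hC0 : 0 < C := by linarith
  have hf_iff (α : ℝ) := halfPlaneDecay_inv_smul_fourierLaplace_iff (α := α) hf hf_supp hC0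
    (by linarith)
  have hg_iff (β : ℝ) := halfPlaneDecay_inv_smul_fourierLaplace_iff (α := β) hg hg_supp hC0
    (by linarith)
  have hprod (z : ℂ) (hz : 0 ≤ z.im) :
      ‖(C⁻¹ : ℂ) • fourierLaplace f z‖ * ‖(C⁻¹ : ℂ) • fourierLaplace g z‖
        ≤ Real.exp (-(T * z.im)) := by
    have hconv := norm_fourierLaplace_le_exp_mul (hf.integrable_convolution L hg) hfg hz
    rw [fourierLaplace_convolution L hf hf_supp hg hg_supp] at hconv
    calc _ = (‖fourierLaplace f z‖ * ‖fourierLaplace g z‖) / C ^ 2 := by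
          simp only [norm_smul, norm_inv, norm_real, Real.norm_eq_abs, abs_of_pos hC0]
          field_simp
      _ ≤ Real.exp (-(T * z.im)) * Ifg / C ^ 2 := by
          gcongr ?_ / _
          exact (hL _ _).trans hconv
      _ ≤ Real.exp (-(T * z.im)) := by
          rw [mul_div_assoc]
          refine mul_le_of_le_one_right (Real.exp_nonneg _) (div_le_one_of_le₀ ?_ (sq_nonneg C))
          nlinarith
  simpa only [hf_iff, hg_iff] using
    ((hf_iff 0).2 hf0).exists_le_add ((hg_iff 0).2 hg0) hT hprod

lemma convolution_indicator_Ioc_of_le (f : ℝ → E) (g : ℝ → E') {a s : ℝ} (hs : s ≤ a) :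
    ((Ioc 0 a).indicator f ⋆[L, volume] (Ioc 0 a).indicator g) s =
      (Ioi 0).indicator (fun s ↦ ∫ t in (0 : ℝ)..s, L (f t) (g (s - t))) s := by
  have hIoc : Ioc 0 a = Ioi 0 ∩ Icc 0 a := by
    ext t
    simpa using fun ht _ ↦ ht.le
  have hpos := congrFun (posConvolution_eq_convolution_indicator ((Icc 0 a).indicator f)
    ((Icc 0 a).indicator g) (L.bilinearRestrictScalars ℝ) volume) s
  rw [indicator_indicator, indicator_indicator, ← hIoc] at hpos
  refine Eq.trans hpos.symm ?_
  rw [posConvolution]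
  by_cases hs0 : s ∈ Ioi 0
  · rw [indicator_of_mem hs0, indicator_of_mem hs0]
    refine intervalIntegral.integral_congr fun t ht ↦ ?_
    rw [uIcc_of_le (mem_Ioi.1 hs0).le] at ht
    have hta : t ∈ Icc 0 a := ⟨ht.1, ht.2.trans hs⟩
    have hsta : s - t ∈ Icc 0 a := ⟨sub_nonneg.2 ht.2, by linarith [ht.1]⟩
    simp only [indicator_of_mem hta, indicator_of_mem hsta,
      ContinuousLinearMap.bilinearRestrictScalars_apply_apply]
  · rw [indicator_of_notMem hs0, indicator_of_notMem hs0]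

lemma ae_eq_zero_on_Icc_of_indicator_Ioc {M : Type*} [Zero M] {f : ℝ → M} {a b : ℝ}
    (hba : b ≤ a) (h : ∀ᵐ t, t ≤ b → (Ioc 0 a).indicator f t = 0) :
    ∀ᵐ t, t ∈ Icc 0 b → f t = 0 := by
  filter_upwards [h, Measure.ae_ne volume 0] with t ht ht0 htb
  simpa [htb.1.lt_of_ne' ht0, htb.2.trans hba] using ht htb.2

theorem stmt10_general [CompleteSpace E] [CompleteSpace E'] [CompleteSpace F]
    (hL : ∀ x y, ‖x‖ * ‖y‖ ≤ ‖L x y‖) {ξ₁ : ℝ → E} {ξ₂ : ℝ → E'} {a : ℝ} (ha : 0 ≤ a)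
    (h₁ : IntegrableOn ξ₁ (Icc 0 a)) (h₂ : IntegrableOn ξ₂ (Icc 0 a))
    (hconv : ∀ᵐ s, s ∈ Icc 0 a → ∫ τ in (0 : ℝ)..s, L (ξ₁ (s - τ)) (ξ₂ τ) = 0) :
    ∃ a₁ a₂ : ℝ, 0 ≤ a₁ ∧ 0 ≤ a₂ ∧ a ≤ a₁ + a₂ ∧
      (∀ᵐ τ, τ ∈ Icc 0 a₁ → ξ₁ τ = 0) ∧ (∀ᵐ τ, τ ∈ Icc 0 a₂ → ξ₂ τ = 0) := by
  have hIoc : Ioc 0 a ⊆ Icc 0 a := Ioc_subset_Icc_self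
  have hzero {s : ℝ} (hs : s ≤ 0) : s ∉ Ioc 0 a := fun h ↦ hs.not_gt h.1
  have hconv_trunc : ∀ᵐ s, s ≤ a →
      ((Ioc 0 a).indicator ξ₂ ⋆[L.flip, volume] (Ioc 0 a).indicator ξ₁) s = 0 := by
    filter_upwards [hconv] with s hs hsa
    rw [convolution_indicator_Ioc_of_le L.flip ξ₂ ξ₁ hsa]
    exact indicator_apply_eq_zero.2 fun hs0 ↦ hs ⟨(mem_Ioi.1 hs0).le, hsa⟩
  obtain ⟨a₂, ha₂, a₁, ha₁, hle, hξ₂, hξ₁⟩ := exists_le_add_of_convolution_eq_zero L.flip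
    (fun x y ↦ (mul_comm _ _).trans_le (hL y x))
    ((h₂.mono_set hIoc).integrable_indicator measurableSet_Ioc)
    (.of_support_subset_isCompact isCompact_Icc (support_indicator_subset.trans hIoc))
    ((h₁.mono_set hIoc).integrable_indicator measurableSet_Ioc)
    (.of_support_subset_isCompact isCompact_Icc (support_indicator_subset.trans hIoc))
    (.of_forall fun t ht ↦ indicator_of_notMem (hzero ht) ξ₂)
    (.of_forall fun t ht ↦ indicator_of_notMem (hzero ht) ξ₁) ha hconv_trunc
  refine ⟨a₁, a₂, ha₁.1, ha₂.1, by rwa [add_comm],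
    ae_eq_zero_on_Icc_of_indicator_Ioc ha₁.2 hξ₁, ae_eq_zero_on_Icc_of_indicator_Ioc ha₂.2 hξ₂⟩

end Convolution

/-- **Titchmarsh convolution theorem.** Let `ξ₁, ξ₂ ∈ L¹_ℂ(ℝ)` with support in
`[0,∞)`, and suppose `∫₀^s ξ₁(s−τ) ξ₂(τ) dτ = 0` for almost all `s ∈ [0,a]`, where `a > 0`.
Then there are nonnegative `a₁, a₂` with `a₁ + a₂ ≥ a` such that `ξ₁ = 0` a.e. on `[0,a₁]` and
`ξ₂ = 0` a.e. on `[0,a₂]`. -/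
theorem stmt10 (ξ₁ ξ₂ : ℝ → ℂ)
    (h1 : Integrable ξ₁) (h2 : Integrable ξ₂)
    (hs1 : ∀ᵐ τ ∂(volume : Measure ℝ), τ < 0 → ξ₁ τ = 0)
    (hs2 : ∀ᵐ τ ∂(volume : Measure ℝ), τ < 0 → ξ₂ τ = 0)
    (a : ℝ) (ha : 0 < a)
    (hconv : ∀ᵐ s ∂(volume : Measure ℝ), s ∈ Set.Icc 0 a →
      ∫ τ in (0:ℝ)..s, ξ₁ (s - τ) * ξ₂ τ = 0) :
    ∃ a₁ a₂ : ℝ, 0 ≤ a₁ ∧ 0 ≤ a₂ ∧ a ≤ a₁ + a₂ ∧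
      (∀ᵐ τ ∂(volume : Measure ℝ), τ ∈ Set.Icc 0 a₁ → ξ₁ τ = 0) ∧
      (∀ᵐ τ ∂(volume : Measure ℝ), τ ∈ Set.Icc 0 a₂ → ξ₂ τ = 0) :=
  stmt10_general (.mul ℂ ℂ) (fun x y ↦ (norm_mul x y).ge) ha.le
    h1.integrableOn h2.integrableOn hconv
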